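/- The real Gamma function satisfies Γ(13/24) = 2^(2/3) · 3^(3/8) · √(√3 + 1) · Γ(1/3) · Γ(1/4) · Γ(1/24)⁻¹. -/

import Mathlib

open Real

theorem aux_convex (c : ℝ) (hc : 0 ≤ c) :
    ConvexOn ℝ (Set.Ioi (0:ℝ)) (fun s => Real.log (Real.Gamma (s / 3 + c))) := by
  refine ⟨convex_Ioi _, ?_⟩
  intro x hx y hy a b ha hb hab
  have hx' : (0:ℝ) < x := hx
  have hy' : (0:ℝ) < y := hy
  have h := Real.convexOn_log_Gamma.2 (x := x / 3 + c) (by show (0:ℝ) < _; positivity)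
    (y := y / 3 + c) (by show (0:ℝ) < _; positivity) ha hb hab
  simp only [Function.comp_apply, smul_eq_mul] at h ⊢
  have e : (a * x + b * y) / 3 + c = a * (x / 3 + c) + b * (y / 3 + c) := by
    have : c = (a + b) * c := by rw [hab, one_mul]
    linear_combination this
  rw [e]
  exact h

noncomputable def tripGamma (s : ℝ) : ℝ :=
  Real.Gamma (s / 3 + 0) * Real.Gamma (s / 3 + 1 / 3) * Real.Gamma (s / 3 + 2 / 3) * 3 ^ (s - 1) /
    (Real.Gamma (1 / 3) * Real.Gamma (2 / 3))

theorem tripGamma_eq {s : ℝ} (hs : 0 < s) : tripGamma s = Real.Gamma s := by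
  have g1 : 0 < Real.Gamma (1 / 3) := Real.Gamma_pos_of_pos (by norm_num)
  have g2 : 0 < Real.Gamma (2 / 3) := Real.Gamma_pos_of_pos (by norm_num)
  have hp : ∀ (c y : ℝ), 0 ≤ c → 0 < y → 0 < Real.Gamma (y / 3 + c) := fun c y hc hy =>
    Real.Gamma_pos_of_pos (by positivity)
  refine Real.eq_Gamma_of_log_convex (f := tripGamma) ?_ ?_ ?_ ?_ hs
  · have hl : ConvexOn ℝ (Set.Ioi (0:ℝ)) (fun s : ℝ => s * Real.log 3) := by
      refine ⟨convex_Ioi _, ?_⟩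
      intro x _ y _ a b _ _ _
      simp only [smul_eq_mul]
      apply le_of_eq
      ring
    refine (((((aux_convex 0 le_rfl).add (aux_convex (1/3) (by norm_num))).add
      (aux_convex (2/3) (by norm_num))).add hl).add_const
        (- Real.log 3 - Real.log (Real.Gamma (1 / 3) * Real.Gamma (2 / 3)))).congr ?_
    intro y hy
    have hy' : (0:ℝ) < y := hy
    have h0 := hp 0 y le_rfl hy'
    have h1 := hp (1/3) y (by norm_num) hy'
    have h2 := hp (2/3) y (by norm_num) hy'
    have h3 : (0:ℝ) < 3 ^ (y - 1) := by positivity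
    simp only [Function.comp_apply, tripGamma, Pi.add_apply]
    rw [Real.log_div (by positivity) (by positivity), Real.log_mul (by positivity) h3.ne',
      Real.log_mul (by positivity) h2.ne', Real.log_mul h0.ne' h1.ne',
      Real.log_rpow (by norm_num)]
    ring
  · intro y hy
    unfold tripGamma
    rw [show (y + 1) / 3 + 0 = y / 3 + 1 / 3 by ring,
      show (y + 1) / 3 + 1 / 3 = y / 3 + 2 / 3 by ring,
      show (y + 1) / 3 + 2 / 3 = (y / 3 + 0) + 1 by ring,
      Real.Gamma_add_one (by positivity : y / 3 + 0 ≠ 0),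
      show y + 1 - 1 = (y - 1) + 1 by ring, Real.rpow_add (by norm_num) (y - 1) 1, Real.rpow_one]
    ring
  · intro y hy
    have h0 := hp 0 y le_rfl hy
    have h1 := hp (1/3) y (by norm_num) hy
    have h2 := hp (2/3) y (by norm_num) hy
    unfold tripGamma
    positivity
  · unfold tripGamma
    norm_num
    exact ⟨g1.ne', g2.ne'⟩

theorem sin_aux : Real.sin (π * (5/12)) = √2 * (√3 + 1) / 4 := by
  rw [show π * (5/12) = π / 4 + π / 6 by ring, Real.sin_add]
  simp
  ring

theorem gamma_thirteen_twentyfourths :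
    Real.Gamma (13/24) =
      (2:ℝ) ^ ((2:ℝ)/3) * (3:ℝ) ^ ((3:ℝ)/8) * Real.sqrt (Real.sqrt 3 + 1) *
        Real.Gamma (1/3) * Real.Gamma (1/4) * (Real.Gamma (1/24))⁻¹ := by
  have p (x : ℝ) (hx : 0 < x) := Real.Gamma_pos_of_pos hx
  have d1 := Real.Gamma_mul_Gamma_add_half (1/24)
  have d2 := Real.Gamma_mul_Gamma_add_half (1/12)
  have d3 := Real.Gamma_mul_Gamma_add_half (1/6)
  have r1 := Real.Gamma_mul_Gamma_one_sub (5/12)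
  have r2 := Real.Gamma_mul_Gamma_one_sub (1/4)
  have t := tripGamma_eq (s := 1/4) (by norm_num)
  unfold tripGamma at t
  rw [sin_aux] at r1
  rw [show π * (1/4) = π / 4 by ring, Real.sin_pi_div_four] at r2
  norm_num at d1 d2 d3 r1 r2 t
  norm_num
  have q1 := p (1/24) (by norm_num)
  have q2 := p (13/24) (by norm_num)
  have q3 := p (1/12) (by norm_num)
  have q4 := p (5/12) (by norm_num)
  have q5 := p (7/12) (by norm_num)
  have q6 := p (1/6) (by norm_num)
  have q7 := p (2/3) (by norm_num)
  have q8 := p (1/3) (by norm_num)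
  have q9 := p (1/4) (by norm_num)
  have q10 := p (3/4) (by norm_num)
  generalize Real.Gamma (1/24) = A at *
  generalize Real.Gamma (13/24) = B at *
  generalize Real.Gamma (1/12) = a at *
  generalize Real.Gamma (5/12) = b at *
  generalize Real.Gamma (7/12) = c at *
  generalize Real.Gamma (1/6) = d at *
  generalize Real.Gamma (2/3) = e at *
  generalize Real.Gamma (1/3) = f at *
  generalize Real.Gamma (1/4) = g at *
  generalize Real.Gamma (3/4) = h at *
  have hu : (0:ℝ) < 2 ^ ((1:ℝ)/12) := by positivity
  have e1 : (2:ℝ) ^ ((11:ℝ)/12) = (2 ^ ((1:ℝ)/12)) ^ 11 := by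
    rw [← Real.rpow_natCast, ← Real.rpow_mul (by norm_num)]; norm_num
  have e2 : (2:ℝ) ^ ((5:ℝ)/6) = (2 ^ ((1:ℝ)/12)) ^ 10 := by
    rw [← Real.rpow_natCast, ← Real.rpow_mul (by norm_num)]; norm_num
  have e3 : (2:ℝ) ^ ((2:ℝ)/3) = (2 ^ ((1:ℝ)/12)) ^ 8 := by
    rw [← Real.rpow_natCast, ← Real.rpow_mul (by norm_num)]; norm_num
  have e4 : √2 = ((2:ℝ) ^ ((1:ℝ)/12)) ^ 6 := by
    rw [← Real.rpow_natCast, ← Real.rpow_mul (by norm_num), Real.sqrt_eq_rpow]; norm_num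
  have e5 : ((2:ℝ) ^ ((1:ℝ)/12)) ^ 12 = 2 := by
    rw [← Real.rpow_natCast, ← Real.rpow_mul (by norm_num)]; norm_num
  have e6 : (3:ℝ) ^ (-((3:ℝ)/4)) = ((3 ^ ((3:ℝ)/8)) ^ 2)⁻¹ := by
    rw [← Real.rpow_natCast, ← Real.rpow_mul (by norm_num), ← Real.rpow_neg (by norm_num)]
    norm_num
  have hv : (0:ℝ) < 3 ^ ((3:ℝ)/8) := by positivity
  have hw : 0 < √π := Real.sqrt_pos.2 Real.pi_pos
  have hw2 : π = √π ^ 2 := (Real.sq_sqrt Real.pi_pos.le).symm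
  have hS : 0 < √(√3 + 1) := Real.sqrt_pos.2 (by positivity)
  have hS2 : √3 + 1 = √(√3 + 1) ^ 2 := (Real.sq_sqrt (by positivity)).symm
  rw [e1] at d1
  rw [e2] at d2
  rw [e3] at d3 ⊢
  rw [e4] at r1 r2
  rw [e6] at t
  rw [hS2] at r1
  generalize √(√3 + 1) = S at *
  generalize √π = w at *
  rw [hw2] at r1 r2
  generalize (2:ℝ) ^ ((1:ℝ)/12) = u at *
  generalize (3:ℝ) ^ ((3:ℝ)/8) = v at *
  clear e1 e2 e3 e4 e6
  have r1' : b * c * (u ^ 6 * S ^ 2) = 4 * w ^ 2 := by rw [r1]; field_simp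
  have r2' : g * h * u ^ 6 = 2 * w ^ 2 := by rw [r2]; field_simp
  have t' : a * b * h = g * v ^ 2 * (f * e) := by rw [← t]; field_simp
  have k1 : a ^ 2 * (b * c * h) = g * v ^ 2 * f ^ 2 * u ^ 18 * w ^ 2 := by
    calc a ^ 2 * (b * c * h) = (a * b * h) * (a * c) := by ring
      _ = g * v ^ 2 * f * (d * e) * u ^ 10 * w := by rw [t', d2]; ring
      _ = _ := by rw [d3]; ring
  have k2 : 8 * (a ^ 2 * w ^ 2) = g ^ 2 * v ^ 2 * f ^ 2 * u ^ 30 * S ^ 2 := by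
    have : w ^ 2 * (8 * (a ^ 2 * w ^ 2)) = w ^ 2 * (g ^ 2 * v ^ 2 * f ^ 2 * u ^ 30 * S ^ 2) := by
      calc w ^ 2 * (8 * (a ^ 2 * w ^ 2)) = a ^ 2 * (4 * w ^ 2) * (2 * w ^ 2) := by ring
        _ = (a ^ 2 * (b * c * h)) * (g * u ^ 12 * S ^ 2) := by rw [← r1', ← r2']; ring
        _ = _ := by rw [k1]; ring
    exact mul_left_cancel₀ (by positivity) this
  have k3 : (A * B) ^ 2 = (u ^ 8 * v * S * f * g) ^ 2 := by
    have h30 : u ^ 30 = 4 * u ^ 6 := by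
      rw [show u ^ 30 = u ^ 12 * u ^ 12 * u ^ 6 by ring, e5]; ring
    have h22 : u ^ 22 = 2 * u ^ 10 := by
      rw [show u ^ 22 = u ^ 12 * u ^ 10 by ring, e5]
    rw [h30] at k2
    rw [d1]
    calc (a * u ^ 11 * w) ^ 2 = u ^ 22 * (a ^ 2 * w ^ 2) := by ring
      _ = u ^ 10 * (8 * (a ^ 2 * w ^ 2)) / 4 := by rw [h22]; ring
      _ = _ := by rw [k2]; ring
  have k4 : A * B = u ^ 8 * v * S * f * g :=
    (pow_left_inj₀ (by positivity) (by positivity) two_ne_zero).1 k3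
  rw [← k4]
  field_simp
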